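/- Let A₁,...,A_k be hermitian n×n complex matrices and let w(ρ) = (tr(ρA₁),...,tr(ρA_k)). For every nonempty face F of W = W(A₁,...,A_k) there exists a unique nonzero orthogonal projection P ∈ M_n(ℂ) (P = P* = P²) such that for every density matrix ρ (ρ positive semidefinite with tr ρ = 1): w(ρ) ∈ F if and only if PρP = ρ. -/

import Mathlib

open Matrix ComplexOrder

noncomputable section

/-- A density matrix: positive semidefinite with unit trace. -/
def IsDensity {n : Type*} [Fintype n] (ρ : Matrix n n ℂ) : Prop :=
  ρ.PosSemidef ∧ ρ.trace = 1

/-- The measurement map `ρ ↦ (tr ρA₁, …, tr ρA_k)` (the traces are real for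
hermitian matrices). -/
def wpt {n : Type*} [Fintype n] {k : ℕ} (A : Fin k → Matrix n n ℂ)
    (ρ : Matrix n n ℂ) : Fin k → ℝ :=
  fun i => ((ρ * A i).trace).re

/-- The joint numerical range of `k` matrices. -/
def JNR {n : Type*} [Fintype n] {k : ℕ} (A : Fin k → Matrix n n ℂ) :
    Set (Fin k → ℝ) :=
  wpt A '' {ρ | IsDensity ρ}

/-- `F` is a face of the convex set `C`: a convex subset such that whenever an
open segment between two points of `C` meets `F`, both endpoints lie in `F`. -/
def IsFaceOf {E : Type*} [AddCommGroup E] [Module ℝ E] (C F : Set E) : Prop :=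
  Convex ℝ F ∧ IsExtreme ℝ C F

/-- The dimension of a convex set: the dimension of its affine hull. -/
def convDim {E : Type*} [AddCommGroup E] [Module ℝ E] (F : Set E) : ℕ :=
  Module.finrank ℝ (affineSpan ℝ F).direction

/-- Euclidean dot product on `Fin d → ℝ`. -/
def dotR {d : ℕ} (u v : Fin d → ℝ) : ℝ := ∑ i, u i * v i

/-- `F` is an exposed face of `C`: the set of minimizers of a linear functional. -/
def IsExposedFace {d : ℕ} (C F : Set (Fin d → ℝ)) : Prop :=
  ∃ u : Fin d → ℝ, F = {x ∈ C | ∀ y ∈ C, dotR u x ≤ dotR u y}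

/-- The normal cone of `C` at `p`. -/
def normalConeAt {d : ℕ} (C : Set (Fin d → ℝ)) (p : Fin d → ℝ) :
    Set (Fin d → ℝ) :=
  {u | ∀ y ∈ C, 0 ≤ dotR (y - p) u}

/-- `p` is a corner point of `C` if the normal cone of `C` at `p` spans `ℝ^d`. -/
def IsCornerPoint {d : ℕ} (C : Set (Fin d → ℝ)) (p : Fin d → ℝ) : Prop :=
  p ∈ C ∧ Submodule.span ℝ (normalConeAt C p) = ⊤

/-- The closed unit disk of `ℝ²`. -/
def unitDisk2 : Set (Fin 2 → ℝ) := {v | v 0 ^ 2 + v 1 ^ 2 ≤ 1}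

/-- An elliptic disk in `ℝ³`: the image of the closed unit disk of `ℝ²` under an
injective affine map. -/
def IsEllipticDisk (F : Set (Fin 3 → ℝ)) : Prop :=
  ∃ f : (Fin 2 → ℝ) →ᵃ[ℝ] (Fin 3 → ℝ), Function.Injective f ∧ F = f '' unitDisk2

/-- A non-elliptic face of `W`: a two-dimensional face that is not an elliptic
disk. -/
def IsNonEllipticFace (W F : Set (Fin 3 → ℝ)) : Prop :=
  IsFaceOf W F ∧ convDim F = 2 ∧ ¬ IsEllipticDisk F

/-- A rank-3 face of the joint numerical range of `A`. -/
def IsRank3Face {k : ℕ} (A : Fin k → Matrix (Fin 4) (Fin 4) ℂ)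
    (F : Set (Fin k → ℝ)) : Prop :=
  F.Nonempty ∧ IsFaceOf (JNR A) F ∧
    ∃ P : Matrix (Fin 4) (Fin 4) ℂ, Pᴴ = P ∧ P * P = P ∧ P.rank = 3 ∧
      ∀ ρ : Matrix (Fin 4) (Fin 4) ℂ, IsDensity ρ → (wpt A ρ ∈ F ↔ P * ρ * P = ρ)

lemma density_le_one {n : ℕ} {ρ : Matrix (Fin n) (Fin n) ℂ} (h : IsDensity ρ) :
    (1 - ρ).PosSemidef := by
  have hs := h.1.1.spectral_theorem
  have htr := h.1.1.trace_eq_sum_eigenvalues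
  replace htr := h.2.symm.trans htr
  have hsum : ∑ i, h.1.1.eigenvalues i = 1 := by
    have := congrArg Complex.re htr
    simpa using this.symm
  have hle : ∀ i, h.1.1.eigenvalues i ≤ 1 := fun i => by
    rw [← hsum]
    exact Finset.single_le_sum (fun j _ => h.1.eigenvalues_nonneg j) (Finset.mem_univ i)
  rw [Unitary.conjStarAlgAut_apply] at hs
  set U : Matrix (Fin n) (Fin n) ℂ := (h.1.1.eigenvectorUnitary : Matrix (Fin n) (Fin n) ℂ)
  have hU : U * star U = 1 := by simp [U]
  have hD : (diagonal (fun i => (1 : ℂ) - (h.1.1.eigenvalues i : ℂ))).PosSemidef := by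
    apply PosSemidef.diagonal
    intro i
    have := hle i
    simp only [Pi.zero_apply, sub_nonneg]
    exact_mod_cast this
  have := hD.mul_mul_conjTranspose_same U
  convert this using 1
  rw [← diagonal_sub, diagonal_one, mul_sub, sub_mul, mul_one, ← star_eq_conjTranspose, hU]
  congr 1

lemma exists_support {n : ℕ} {ρ : Matrix (Fin n) (Fin n) ℂ} (h : ρ.PosSemidef) :
    ∃ P : Matrix (Fin n) (Fin n) ℂ, Pᴴ = P ∧ P * P = P ∧ ρ * P = ρ ∧
      ∃ c : ℝ, 0 < c ∧ c < 1 ∧ (ρ - c • P).PosSemidef := by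
  have hs := h.1.spectral_theorem
  rw [Unitary.conjStarAlgAut_apply] at hs
  set U : Matrix (Fin n) (Fin n) ℂ := (h.1.eigenvectorUnitary : Matrix (Fin n) (Fin n) ℂ)
  have hU : star U * U = 1 := by simp [U]
  obtain ⟨l, hl⟩ : ∃ l, l = h.1.eigenvalues := ⟨_, rfl⟩
  have hl0 : ∀ i, 0 ≤ l i := fun i => by rw [hl]; exact h.eigenvalues_nonneg i
  rw [← hl] at hs
  let e : Fin n → ℂ := fun i => if l i = 0 then 0 else 1
  have key : ∀ a b : Fin n → ℂ, (U * diagonal a * star U) * (U * diagonal b * star U)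
      = U * diagonal (fun i => a i * b i) * star U := by
    intro a b
    calc _ = U * diagonal a * (star U * U) * diagonal b * star U := by simp only [mul_assoc]
      _ = _ := by rw [hU, mul_one, mul_assoc U, diagonal_mul_diagonal]
  obtain ⟨c, ⟨hc, hc1⟩, hc0⟩ : ∃ c : ℝ, ((∀ i, l i ≠ 0 → c < l i) ∧ c < 1) ∧ 0 < c := by
    have h1 : ∀ᶠ c : ℝ in nhdsWithin 0 (Set.Ioi 0), (∀ i, l i ≠ 0 → c < l i) ∧ c < 1 := by
      refine Filter.Eventually.and ?_ ?_
      · rw [Filter.eventually_all]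
        intro i
        by_cases hi : l i = 0
        · simp [hi]
        · have : 0 < l i := lt_of_le_of_ne (hl0 i) (Ne.symm hi)
          filter_upwards [nhdsWithin_le_nhds (Iio_mem_nhds this)] with c hc _ using hc
      · exact nhdsWithin_le_nhds (Iio_mem_nhds one_pos)
    exact (h1.and self_mem_nhdsWithin).exists
  refine ⟨U * diagonal e * star U, ?_, ?_, ?_, c, hc0, hc1, ?_⟩
  · rw [star_eq_conjTranspose, conjTranspose_mul, conjTranspose_mul, conjTranspose_conjTranspose,
      diagonal_conjTranspose, mul_assoc]
    congr 3
    ext i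
    by_cases hi : l i = 0 <;> simp [e, hi]
  · rw [key]
    congr 3
    ext i
    by_cases hi : l i = 0 <;> simp [e, hi]
  · conv_lhs => rw [hs]
    conv_rhs => rw [hs]
    rw [key]
    congr 3
    ext i
    by_cases hi : l i = 0 <;> simp [e, hi]
  · have hD : (diagonal (fun i => ((l i : ℂ)) - (c : ℂ) * e i)).PosSemidef := by
      apply PosSemidef.diagonal
      intro i
      by_cases hi : l i = 0
      · simp [e, hi]
      · simp only [Pi.zero_apply, sub_nonneg, e, hi, if_false, mul_one]
        exact_mod_cast (hc i hi).le
    have := hD.mul_mul_conjTranspose_same U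
    convert this using 1
    conv_lhs => rw [hs]
    rw [← diagonal_sub, mul_sub, sub_mul, ← star_eq_conjTranspose]
    congr 1
    have : diagonal (fun i => (c : ℂ) * e i) = c • diagonal e := by
      rw [← diagonal_smul]; congr 1
    rw [this, mul_smul_comm, smul_mul_assoc]

lemma wpt_add {n k : ℕ} (A : Fin k → Matrix (Fin n) (Fin n) ℂ) (a b : ℝ)
    (ρ σ : Matrix (Fin n) (Fin n) ℂ) :
    wpt A (a • ρ + b • σ) = a • wpt A ρ + b • wpt A σ := by
  ext i
  simp [wpt, add_mul, trace_add, trace_smul]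

lemma psd_rsmul {n : ℕ} {ρ : Matrix (Fin n) (Fin n) ℂ} (h : ρ.PosSemidef) {a : ℝ} (ha : 0 ≤ a) :
    (a • ρ).PosSemidef := h.smul ha

lemma uniq_aux {n k : ℕ} (A : Fin k → Matrix (Fin n) (Fin n) ℂ)
    (F : Set (Fin k → ℝ)) {P Q : Matrix (Fin n) (Fin n) ℂ}
    (hP : Pᴴ = P) (hPP : P * P = P) (hP0 : P ≠ 0)
    (h1 : ∀ ρ : Matrix (Fin n) (Fin n) ℂ, IsDensity ρ → (wpt A ρ ∈ F ↔ P * ρ * P = ρ))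
    (hQQ : Q * Q = Q)
    (h2 : ∀ ρ : Matrix (Fin n) (Fin n) ℂ, IsDensity ρ → (wpt A ρ ∈ F ↔ Q * ρ * Q = ρ)) :
    Q * P = P := by
  have hpsd : P.PosSemidef := by
    have := posSemidef_conjTranspose_mul_self P
    rwa [hP, hPP] at this
  have htr : P.trace ≠ 0 := fun h => hP0 (hpsd.trace_eq_zero_iff.1 h)
  have hd : IsDensity (P.trace⁻¹ • P) :=
    ⟨hpsd.smul (inv_nonneg.2 hpsd.trace_nonneg), by simp [htr]⟩
  have := (h2 _ hd).1 ((h1 _ hd).2 (by simp [hPP]))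
  have h3 : Q * P * Q = P := by
    simp only [mul_smul_comm, smul_mul_assoc] at this
    exact smul_right_injective _ (inv_ne_zero htr) this
  rw [← h3, ← mul_assoc, ← mul_assoc, hQQ]

/-- every nonempty face of the joint numerical range has a unique
associated nonzero orthogonal projection. -/
theorem stmt16 {n k : ℕ} (A : Fin k → Matrix (Fin n) (Fin n) ℂ)
    (hA : ∀ i, (A i).IsHermitian)
    (F : Set (Fin k → ℝ)) (hF : IsFaceOf (JNR A) F) (hFne : F.Nonempty) :
    ∃! P : Matrix (Fin n) (Fin n) ℂ, Pᴴ = P ∧ P * P = P ∧ P ≠ 0 ∧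
      ∀ ρ : Matrix (Fin n) (Fin n) ℂ, IsDensity ρ →
        (wpt A ρ ∈ F ↔ P * ρ * P = ρ) := by
  obtain ⟨hconv, hext⟩ := hF
  let G : Set (Matrix (Fin n) (Fin n) ℂ) := {ρ | IsDensity ρ ∧ wpt A ρ ∈ F}
  have hG : G.Nonempty := by
    obtain ⟨x, hx⟩ := hFne
    obtain ⟨ρ, hρ, rfl⟩ := hext.1 hx
    exact ⟨ρ, hρ, hx⟩
  obtain ⟨ρ0, ⟨hd0, hw0⟩, hmin⟩ := (measure fun ρ : Matrix (Fin n) (Fin n) ℂ =>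
    Module.finrank ℂ (LinearMap.ker ρ.mulVecLin)).wf.has_min G hG
  obtain ⟨P, hP, hPP, hρP, c, hc0, hc1, hcP⟩ := exists_support hd0.1
  have hmain : ∀ ρ : Matrix (Fin n) (Fin n) ℂ, IsDensity ρ →
        (wpt A ρ ∈ F ↔ P * ρ * P = ρ) := by
    intro ρ hρ
    constructor
    · intro hw
      let σ := (1/2 : ℝ) • ρ0 + (1/2 : ℝ) • ρ
      have hσ : σ ∈ G := by
        refine ⟨⟨(psd_rsmul hd0.1 (by norm_num)).add (psd_rsmul hρ.1 (by norm_num)), ?_⟩, ?_⟩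
        · simp only [σ, trace_add, trace_smul, hd0.2, hρ.2]
          apply Complex.ext <;> norm_num
        · simp only [σ]
          rw [wpt_add]
          exact hconv hw0 hw (by norm_num) (by norm_num) (by norm_num)
      have hker : ∀ v, σ *ᵥ v = 0 → ρ0 *ᵥ v = 0 ∧ ρ *ᵥ v = 0 := by
        intro v hv
        have e : star v ⬝ᵥ (ρ0 *ᵥ v) + star v ⬝ᵥ (ρ *ᵥ v) = 0 := by
          have : star v ⬝ᵥ (σ *ᵥ v) = 0 := by rw [hv]; simp
          simp only [σ, add_mulVec, smul_mulVec, dotProduct_add, dotProduct_smul] at this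
          rw [← smul_add] at this
          exact (smul_eq_zero.1 this).resolve_left (by norm_num)
        have n1 := hd0.1.dotProduct_mulVec_nonneg v
        have n2 := hρ.1.dotProduct_mulVec_nonneg v
        have := (add_eq_zero_iff_of_nonneg n1 n2).1 e
        exact ⟨(hd0.1.dotProduct_mulVec_zero_iff v).1 this.1,
          (hρ.1.dotProduct_mulVec_zero_iff v).1 this.2⟩
      have hle : LinearMap.ker σ.mulVecLin ≤ LinearMap.ker ρ0.mulVecLin := by
        intro v hv
        simp only [LinearMap.mem_ker, mulVecLin_apply] at hv ⊢
        exact (hker v hv).1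
      have heq := Submodule.eq_of_le_of_finrank_le hle (not_lt.1 (hmin σ hσ))
      have hz : ρ * (1 - P) = 0 := by
        have h0 : ρ0 * (1 - P) = 0 := by rw [mul_sub, mul_one, hρP, sub_self]
        apply Matrix.ext_of_mulVec_single
        intro i
        rw [← mulVec_mulVec, zero_mulVec]
        apply (hker _ _).2
        have : (1 - P) *ᵥ Pi.single i 1 ∈ LinearMap.ker ρ0.mulVecLin := by
          simp only [LinearMap.mem_ker, mulVecLin_apply, mulVec_mulVec, h0, zero_mulVec]
        rw [← heq] at this
        simpa only [LinearMap.mem_ker, mulVecLin_apply] using this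
      have h1 : ρ * P = ρ := by
        rw [mul_sub, mul_one, sub_eq_zero] at hz
        exact hz.symm
      have h2 : P * ρ = ρ := by
        have := congrArg conjTranspose h1
        rwa [conjTranspose_mul, hP, hρ.1.1.eq] at this
      rw [h2, h1]
    · intro h
      let τ := (1 - c)⁻¹ • (ρ0 - c • ρ)
      have hc1' : 0 < 1 - c := by linarith
      have hτ : IsDensity τ := by
        constructor
        · apply psd_rsmul _ (inv_nonneg.2 hc1'.le)
          have := (density_le_one hρ).mul_mul_conjTranspose_same P
          have := hcP.add (psd_rsmul this hc0.le)
          convert this using 1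
          rw [hP, mul_sub, sub_mul, mul_one, hPP, h, smul_sub]
          abel
        · simp only [τ, trace_smul, trace_sub, hd0.2, hρ.2]
          have : (1 : ℂ) - c ≠ 0 := by exact_mod_cast hc1'.ne'
          simp [this]
      have e : ρ0 = c • ρ + (1 - c) • τ := by
        simp only [τ, smul_smul, mul_inv_cancel₀ hc1'.ne', one_smul]
        abel
      refine hext.2 (x := wpt A ρ) ⟨ρ, hρ, rfl⟩ (y := wpt A τ) ⟨τ, hτ, rfl⟩ hw0 ?_
      refine ⟨c, 1 - c, hc0, hc1', by ring, ?_⟩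
      rw [← wpt_add, ← e]
  have hP0 : P ≠ 0 := by
    rintro rfl
    have := hd0.2
    rw [← hρP] at this
    simp at this
  refine ⟨P, ⟨hP, hPP, hP0, hmain⟩, ?_⟩
  rintro Q ⟨hQ, hQQ, hQ0, hQm⟩
  have e1 := uniq_aux A F hP hPP hP0 hmain hQQ hQm
  have e2 := uniq_aux A F hQ hQQ hQ0 hQm hPP hmain
  have := congrArg conjTranspose e1
  rw [conjTranspose_mul, hP, hQ] at this
  rw [← e2, this]
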